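/- Let U ⊆ ℂ be a simply connected domain, 𝒲 a Whitney square decomposition of U, Q ∈ 𝒲, and let γ : [s, t] → U be a hyperbolic geodesic segment (parameterized by hyperbolic length) with both endpoints in Q. Then the whole segment γ([s,t]) is contained in the closed hyperbolic ball of radius 2 around cen(Q), and its Euclidean length satisfies length(γ([s,t])) ≤ c · len(Q) for a universal constant c > 0. -/

import Mathlib

open Complex Set Metric MeasureTheory

noncomputable section

/-- The length of a `C¹` curve `γ : [0,1] → ℂ` with respect to a conformal density `ρ`. -/
def pathLen (ρ : ℂ → ℝ) (γ : ℝ → ℂ) : ℝ :=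
  ∫ t in (0:ℝ)..1, ρ (γ t) * ‖deriv γ t‖

/-- `C¹` curves from `z` to `w` staying in `D`. -/
def PathsIn (D : Set ℂ) (z w : ℂ) : Set (ℝ → ℂ) :=
  {γ | ContDiff ℝ 1 γ ∧ γ 0 = z ∧ γ 1 = w ∧ ∀ t ∈ Icc (0:ℝ) 1, γ t ∈ D}

/-- The conformal distance on `D` associated to the density `ρ`. -/
def confDist (ρ : ℂ → ℝ) (D : Set ℂ) (z w : ℂ) : ℝ :=
  sInf (pathLen ρ '' PathsIn D z w)

/-- The hyperbolic density on `D`, pulled back from `1/(1-|z|²)` on the unit disk via a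
Riemann map `φ : D → 𝔻`. -/
def hypDensity (φ : ℂ → ℂ) (z : ℂ) : ℝ := ‖deriv φ z‖ / (1 - ‖φ z‖ ^ 2)

/-- The hyperbolic distance on `D`, where `φ` is a Riemann map from `D` onto the unit disk. -/
def distHyp (φ : ℂ → ℂ) (D : Set ℂ) (z w : ℂ) : ℝ := confDist (hypDensity φ) D z w
/-- The closed axis-parallel square with center `c` and side length `s`. -/
def square (c : ℂ) (s : ℝ) : Set ℂ :=
  {z : ℂ | |z.re - c.re| ≤ s / 2 ∧ |z.im - c.im| ≤ s / 2}

/-- The (Euclidean) distance between two subsets of `ℂ`. -/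
def sdist (A B : Set ℂ) : ℝ := sInf {d : ℝ | ∃ a ∈ A, ∃ b ∈ B, d = dist a b}

/-- A Whitney square decomposition of an open set `D ⊊ ℂ`: a family of closed dyadic
squares (recorded by their centers and side lengths) with pairwise disjoint interiors
covering `D`, such that `diam(Q) ≤ dist(Q, ∂D) < 4 diam(Q)` for each square `Q`. -/
structure IsWhitneyDecomp (D : Set ℂ) (W : Set (ℂ × ℝ)) : Prop where
  dyadic : ∀ q ∈ W, ∃ n : ℤ, q.2 = (2:ℝ) ^ n
  cover : D = ⋃ q ∈ W, square q.1 q.2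
  disjInt : ∀ q ∈ W, ∀ q' ∈ W, q ≠ q' →
    interior (square q.1 q.2) ∩ interior (square q'.1 q'.2) = ∅
  lower : ∀ q ∈ W, Metric.diam (square q.1 q.2) ≤ sdist (square q.1 q.2) Dᶜ
  upper : ∀ q ∈ W, sdist (square q.1 q.2) Dᶜ < 4 * Metric.diam (square q.1 q.2)

/-! By Schwarz-Pick, the hyperbolic density of `U` is at most `1 / diam Q` on a Whitney square `Q`,
so `Q` has hyperbolic diameter at most `1`. Hence a geodesic segment with endpoints in `Q` has
hyperbolic length at most `1`, and by the triangle inequality it stays within distance `2` of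
any point of `Q`.

For the Euclidean length, a form of the Koebe `1/4` theorem with a worse constant is enough. Fix
`x ∉ U` at distance comparable to `diam Q` from `Q`. As `ψ - x` has a holomorphic logarithm and
`ψ` is injective, the image of the logarithm contains no two points differing by `2πi`, so Bloch's
theorem bounds its derivative. Thus the geodesic `γ` satisfies `|γ'| ≤ C |γ - x|`, and Grönwall's
inequality bounds `|γ - x|`, then `|γ'|`, by a constant times `diam Q`.
-/

open scoped ComplexConjugate

section Whitney

variable {A B U Q : Set ℂ}

theorem sdist_le_dist {a b : ℂ} (ha : a ∈ A) (hb : b ∈ B) : sdist A B ≤ dist a b :=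
  csInf_le ⟨0, by rintro _ ⟨a, -, b, -, rfl⟩; exact dist_nonneg⟩ ⟨a, ha, b, hb, rfl⟩

theorem sdist_empty_right (A : Set ℂ) : sdist A ∅ = 0 := by
  simp [sdist]

theorem ball_subset_of_le_sdist_compl {a : ℂ} {r : ℝ} (ha : a ∈ A) (hr : r ≤ sdist A Uᶜ) :
    ball a r ⊆ U := by
  intro w hw
  by_contra hwU
  exact (hr.trans (sdist_le_dist ha hwU)).not_gt (mem_ball'.1 hw)

theorem exists_dist_lt_of_sdist_lt {r : ℝ} (hA : A.Nonempty) (hB : B.Nonempty)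
    (hr : sdist A B < r) : ∃ a ∈ A, ∃ b ∈ B, dist a b < r := by
  obtain ⟨a, ha⟩ := hA
  obtain ⟨b, hb⟩ := hB
  have hne : {d : ℝ | ∃ a ∈ A, ∃ b ∈ B, d = dist a b}.Nonempty := ⟨_, a, ha, b, hb, rfl⟩
  obtain ⟨_, ⟨a', ha', b', hb', rfl⟩, hlt⟩ := exists_lt_of_csInf_lt hne hr
  exact ⟨a', ha', b', hb', hlt⟩

/-- A bounded convex set with `diam(Q) ≤ dist(Q, ∂U) < 4 diam(Q)`, as are the squares of a Whitney
decomposition of `U`. As in `IsWhitneyDecomp`, the distance to `∂U` is measured as the distance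
to `Uᶜ`. -/
structure IsWhitneyPiece (U Q : Set ℂ) : Prop where
  convex : Convex ℝ Q
  isBounded : Bornology.IsBounded Q
  diam_le_sdist : diam Q ≤ sdist Q Uᶜ
  sdist_lt_four_mul_diam : sdist Q Uᶜ < 4 * diam Q

namespace IsWhitneyPiece

theorem diam_pos (hQ : IsWhitneyPiece U Q) : 0 < diam Q := by
  linarith [hQ.diam_le_sdist, hQ.sdist_lt_four_mul_diam]

theorem ball_subset (hQ : IsWhitneyPiece U Q) {z : ℂ} (hz : z ∈ Q) : ball z (diam Q) ⊆ U :=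
  ball_subset_of_le_sdist_compl hz hQ.diam_le_sdist

theorem subset (hQ : IsWhitneyPiece U Q) : Q ⊆ U := fun _ hz =>
  hQ.ball_subset hz (mem_ball_self hQ.diam_pos)

theorem compl_nonempty (hQ : IsWhitneyPiece U Q) : Uᶜ.Nonempty := by
  refine nonempty_iff_ne_empty.2 fun hempty => hQ.diam_pos.not_ge ?_
  simpa only [hempty, sdist_empty_right] using hQ.diam_le_sdist

theorem exists_notMem_dist_le (hQ : IsWhitneyPiece U Q) :
    ∃ x ∉ U, ∀ z ∈ Q, dist z x ≤ 5 * diam Q := by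
  have hne : Q.Nonempty := nonempty_iff_ne_empty.2 fun hempty =>
    hQ.diam_pos.ne' (hempty ▸ diam_empty)
  obtain ⟨a, ha, x, hx, hax⟩ :=
    exists_dist_lt_of_sdist_lt hne hQ.compl_nonempty hQ.sdist_lt_four_mul_diam
  refine ⟨x, hx, fun z hz => ?_⟩
  linarith [dist_triangle z a x, dist_le_diam_of_mem hQ.isBounded hz ha]

end IsWhitneyPiece

theorem square_eq_closedBall_reProdIm_closedBall (c : ℂ) (s : ℝ) :
    square c s = closedBall c.re (s / 2) ×ℂ closedBall c.im (s / 2) := by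
  ext z
  simp only [square, mem_ofPred_eq, mem_reProdIm, mem_closedBall, Real.dist_eq]

theorem convex_square (c : ℂ) (s : ℝ) : Convex ℝ (square c s) := by
  rw [square_eq_closedBall_reProdIm_closedBall]
  exact ((convex_closedBall _ _).is_linear_preimage reLm.isLinear).inter
    ((convex_closedBall _ _).is_linear_preimage imLm.isLinear)

theorem center_mem_square {c : ℂ} {s : ℝ} (hs : 0 ≤ s) : c ∈ square c s := by
  simp only [square, mem_ofPred_eq, sub_self, abs_zero, and_self]
  positivity

theorem square_subset_closedBall (c : ℂ) (s : ℝ) : square c s ⊆ closedBall c s := by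
  rintro z ⟨hre, him⟩
  rw [mem_closedBall_iff_norm]
  calc ‖z - c‖ ≤ |(z - c).re| + |(z - c).im| := norm_le_abs_re_add_abs_im _
    _ ≤ s / 2 + s / 2 := add_le_add (by rwa [sub_re]) (by rwa [sub_im])
    _ = s := add_halves s

theorem isBounded_square (c : ℂ) (s : ℝ) : Bornology.IsBounded (square c s) :=
  isBounded_closedBall.subset (square_subset_closedBall c s)

theorem diam_square_le {c : ℂ} {s : ℝ} (hs : 0 ≤ s) : diam (square c s) ≤ 2 * s :=
  (diam_mono (square_subset_closedBall c s) isBounded_closedBall).trans (diam_closedBall hs)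

namespace IsWhitneyDecomp

variable {W : Set (ℂ × ℝ)} {q : ℂ × ℝ}

theorem side_pos (hW : IsWhitneyDecomp U W) (hq : q ∈ W) : 0 < q.2 := by
  obtain ⟨n, hn⟩ := hW.dyadic q hq
  rw [hn]
  positivity

theorem isWhitneyPiece (hW : IsWhitneyDecomp U W) (hq : q ∈ W) :
    IsWhitneyPiece U (square q.1 q.2) :=
  ⟨convex_square _ _, isBounded_square _ _, hW.lower q hq, hW.upper q hq⟩

end IsWhitneyDecomp

end Whitney

section ConformalLength

variable {ρ : ℂ → ℝ} {D : Set ℂ} {z w p : ℂ} {γ γ₁ γ₂ : ℝ → ℂ}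

theorem continuousOn_density_mul_norm_deriv (hρ : ContinuousOn ρ D)
    (hγ : γ ∈ PathsIn D z w) : ContinuousOn (fun t => ρ (γ t) * ‖deriv γ t‖) (Icc 0 1) := by
  obtain ⟨hsmooth, -, -, hD⟩ := hγ
  exact (hρ.comp hsmooth.continuous.continuousOn hD).mul
    (hsmooth.continuous_deriv le_rfl).norm.continuousOn

theorem pathLen_nonneg (hρ : ∀ z ∈ D, 0 ≤ ρ z) (hγ : γ ∈ PathsIn D z w) : 0 ≤ pathLen ρ γ :=
  intervalIntegral.integral_nonneg zero_le_one fun t ht =>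
    mul_nonneg (hρ _ (hγ.2.2.2 t ht)) (norm_nonneg _)

theorem confDist_le_pathLen (hρ : ∀ z ∈ D, 0 ≤ ρ z) (hγ : γ ∈ PathsIn D z w) :
    confDist ρ D z w ≤ pathLen ρ γ := by
  refine csInf_le ⟨0, ?_⟩ (mem_image_of_mem _ hγ)
  rintro _ ⟨γ', hγ', rfl⟩
  exact pathLen_nonneg hρ hγ'

theorem integral_density_mul_norm_deriv_comp {τ : ℝ → ℝ} {a b : ℝ} (ρ : ℂ → ℝ) (hab : a ≤ b)
    (hγ₁ : Differentiable ℝ γ₁) (hτ : Differentiable ℝ τ) (hmono : Monotone τ)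
    (heq : EqOn γ (γ₁ ∘ τ) (Ioo a b)) :
    ∫ t in a..b, ρ (γ t) * ‖deriv γ t‖ = ∫ t in τ a..τ b, ρ (γ₁ t) * ‖deriv γ₁ t‖ := by
  have hτ' (t : ℝ) : 0 ≤ deriv τ t := hmono.deriv_nonneg
  rw [← intervalIntegral.integral_comp_mul_deriv_of_deriv_nonneg hτ.continuous.continuousOn
    (fun t _ => (hτ t).hasDerivAt) (fun t _ => hτ' t)]
  refine intervalIntegral.integral_congr_Ioo_of_le hab fun t ht => ?_
  have hderiv : deriv γ t = deriv τ t • deriv γ₁ (τ t) := by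
    rw [(heq.eventuallyEq_of_mem (isOpen_Ioo.mem_nhds ht)).deriv_eq]
    exact deriv.scomp t (hγ₁ _) (hτ t)
  simp only [hderiv, heq ht, Function.comp_apply, norm_smul, Real.norm_of_nonneg (hτ' t)]
  ring

/-- The concatenation of two `C¹` curves with `γ₁ 1 = γ₂ 0`, reparametrized to be again `C¹`:
each of the two smooth transitions is constant while the other one moves. -/
def smoothConcat (γ₁ γ₂ : ℝ → ℂ) (t : ℝ) : ℂ :=
  γ₁ (Real.smoothTransition (2 * t)) + γ₂ (Real.smoothTransition (2 * t - 1)) - γ₂ 0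

theorem smoothConcat_of_le_half {t : ℝ} (ht : t ≤ 1 / 2) :
    smoothConcat γ₁ γ₂ t = γ₁ (Real.smoothTransition (2 * t)) := by
  rw [smoothConcat, Real.smoothTransition.zero_of_nonpos (by linarith : 2 * t - 1 ≤ 0),
    add_sub_cancel_right]

theorem smoothConcat_of_half_le (h : γ₁ 1 = γ₂ 0) {t : ℝ} (ht : 1 / 2 ≤ t) :
    smoothConcat γ₁ γ₂ t = γ₂ (Real.smoothTransition (2 * t - 1)) := by
  rw [smoothConcat, Real.smoothTransition.one_of_one_le (by linarith : 1 ≤ 2 * t), h,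
    add_sub_cancel_left]

theorem smoothConcat_mem_pathsIn (h₁ : γ₁ ∈ PathsIn D z w) (h₂ : γ₂ ∈ PathsIn D w p) :
    smoothConcat γ₁ γ₂ ∈ PathsIn D z p := by
  obtain ⟨hsmooth₁, hz₁, hw₁, hD₁⟩ := h₁
  obtain ⟨hsmooth₂, hw₂, hp₂, hD₂⟩ := h₂
  have hjoin : γ₁ 1 = γ₂ 0 := hw₁.trans hw₂.symm
  have htransition : ContDiff ℝ 1 Real.smoothTransition := Real.smoothTransition.contDiff (n := 1)
  refine ⟨?_, ?_, ?_, fun t _ => ?_⟩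
  · exact ((hsmooth₁.comp (htransition.comp (by fun_prop))).add
      (hsmooth₂.comp (htransition.comp (by fun_prop)))).sub contDiff_const
  · rw [smoothConcat_of_le_half (by norm_num), mul_zero, Real.smoothTransition.zero, hz₁]
  · rw [smoothConcat_of_half_le hjoin (by norm_num),
      Real.smoothTransition.one_of_one_le (by norm_num), hp₂]
  · have hmem (s : ℝ) : Real.smoothTransition s ∈ Icc (0 : ℝ) 1 :=
      ⟨Real.smoothTransition.nonneg s, Real.smoothTransition.le_one s⟩
    rcases le_total t (1 / 2) with ht | ht
    · rw [smoothConcat_of_le_half ht]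
      exact hD₁ _ (hmem _)
    · rw [smoothConcat_of_half_le hjoin ht]
      exact hD₂ _ (hmem _)

theorem pathLen_smoothConcat (hρ : ContinuousOn ρ D) (h₁ : γ₁ ∈ PathsIn D z w)
    (h₂ : γ₂ ∈ PathsIn D w p) :
    pathLen ρ (smoothConcat γ₁ γ₂) = pathLen ρ γ₁ + pathLen ρ γ₂ := by
  have hjoin : γ₁ 1 = γ₂ 0 := h₁.2.2.1.trans h₂.2.1.symm
  have hcont := continuousOn_density_mul_norm_deriv hρ (smoothConcat_mem_pathsIn h₁ h₂)
  have htransition : Differentiable ℝ Real.smoothTransition :=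
    (Real.smoothTransition.contDiff (n := 1)).differentiable one_ne_zero
  have hfirst := integral_density_mul_norm_deriv_comp (γ := smoothConcat γ₁ γ₂)
    (τ := fun t => Real.smoothTransition (2 * t)) ρ one_half_pos.le
    (h₁.1.differentiable one_ne_zero) (by fun_prop)
    (fun s t hst => Real.smoothTransition.monotone (by linarith))
    (fun t ht => smoothConcat_of_le_half ht.2.le)
  have hsecond := integral_density_mul_norm_deriv_comp (γ := smoothConcat γ₁ γ₂)
    (τ := fun t => Real.smoothTransition (2 * t - 1)) ρ one_half_lt_one.le
    (h₂.1.differentiable one_ne_zero) (by fun_prop)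
    (fun s t hst => Real.smoothTransition.monotone (by linarith))
    (fun t ht => smoothConcat_of_half_le hjoin ht.1.le)
  simp only [mul_zero, mul_one_div_cancel (two_ne_zero' ℝ), Real.smoothTransition.zero,
    Real.smoothTransition.one] at hfirst
  simp only [mul_one_div_cancel (two_ne_zero' ℝ), sub_self, Real.smoothTransition.zero,
    Real.smoothTransition.one_of_one_le (by norm_num : (1 : ℝ) ≤ 2 * 1 - 1)] at hsecond
  rw [pathLen, pathLen, pathLen, ← hfirst, ← hsecond]
  refine (intervalIntegral.integral_add_adjacent_intervals ?_ ?_).symm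
  all_goals
    refine (hcont.mono ?_).intervalIntegrable_of_Icc (by norm_num)
    exact Icc_subset_Icc (by norm_num) (by norm_num)

theorem confDist_triangle (hnonneg : ∀ z ∈ D, 0 ≤ ρ z) (hρ : ContinuousOn ρ D)
    (h₁ : (PathsIn D z w).Nonempty) (h₂ : (PathsIn D w p).Nonempty) :
    confDist ρ D z p ≤ confDist ρ D z w + confDist ρ D w p := by
  have hconcat (γ₁ : ℝ → ℂ) (hγ₁ : γ₁ ∈ PathsIn D z w) (γ₂ : ℝ → ℂ) (hγ₂ : γ₂ ∈ PathsIn D w p) :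
      confDist ρ D z p ≤ pathLen ρ γ₁ + pathLen ρ γ₂ := by
    rw [← pathLen_smoothConcat hρ hγ₁ hγ₂]
    exact confDist_le_pathLen hnonneg (smoothConcat_mem_pathsIn hγ₁ hγ₂)
  have hfirst (γ₂ : ℝ → ℂ) (hγ₂ : γ₂ ∈ PathsIn D w p) :
      confDist ρ D z p - pathLen ρ γ₂ ≤ confDist ρ D z w := by
    refine le_csInf (h₁.image _) ?_
    rintro _ ⟨γ₁, hγ₁, rfl⟩
    linarith [hconcat γ₁ hγ₁ γ₂ hγ₂]
  have hsecond : confDist ρ D z p - confDist ρ D z w ≤ confDist ρ D w p := by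
    refine le_csInf (h₂.image _) ?_
    rintro _ ⟨γ₂, hγ₂, rfl⟩
    linarith [hfirst γ₂ hγ₂]
  linarith

end ConformalLength

section Tanh

theorem hasDerivAt_tanh (x : ℝ) : HasDerivAt Real.tanh (1 - Real.tanh x ^ 2) x := by
  have hcosh : Real.cosh x ≠ 0 := (Real.cosh_pos x).ne'
  have hquot := (Real.hasDerivAt_sinh x).div (Real.hasDerivAt_cosh x) hcosh
  have htanh : Real.tanh = Real.sinh / Real.cosh := funext Real.tanh_eq_sinh_div_cosh
  rw [← htanh] at hquot
  refine hquot.congr_deriv ?_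
  rw [Real.tanh_eq_sinh_div_cosh]
  field_simp

theorem contDiff_tanh : ContDiff ℝ 1 Real.tanh := by
  rw [funext Real.tanh_eq_sinh_div_cosh]
  exact Real.contDiff_sinh.div Real.contDiff_cosh fun x => (Real.cosh_pos x).ne'

theorem hasDerivAt_artanh {x : ℝ} (hx : x ∈ Ioo (-1) 1) :
    HasDerivAt Real.artanh (1 / (1 - x ^ 2)) x := by
  obtain ⟨hlow, hhigh⟩ := hx
  have hadd : 1 + x ≠ 0 := by linarith
  have hsub : 1 - x ≠ 0 := by linarith
  have hlog : HasDerivAt (fun y => 1 / 2 * Real.log ((1 + y) / (1 - y))) (1 / (1 - x ^ 2)) x := by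
    have hquot := ((hasDerivAt_id x).const_add 1).div ((hasDerivAt_id x).const_sub 1) hsub
    refine ((hquot.log (div_ne_zero hadd hsub)).const_mul (1 / 2)).congr_deriv ?_
    have hfactor : 1 - x ^ 2 = (1 + x) * (1 - x) := by ring
    simp only [id_eq, hfactor, Pi.div_apply]
    field_simp
    ring
  refine hlog.congr_of_eventuallyEq ?_
  filter_upwards [Icc_mem_nhds hlow hhigh] with y hy
  exact Real.artanh_eq_half_log hy

end Tanh

section SchwarzPick

theorem norm_one_sub_conj_mul_sq_sub_norm_sub_sq (b z : ℂ) :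
    ‖1 - conj b * z‖ ^ 2 - ‖z - b‖ ^ 2 = (1 - ‖b‖ ^ 2) * (1 - ‖z‖ ^ 2) := by
  simp only [Complex.sq_norm, normSq_apply, sub_re, sub_im, mul_re, mul_im, conj_re, conj_im,
    one_re, one_im]
  ring

/-- The Möbius transformation `z ↦ (z - b) / (1 - b̄ z)`, which for `‖b‖ < 1` is the automorphism
of the unit disc sending `b` to `0`. -/
def discAut (b z : ℂ) : ℂ := (z - b) / (1 - conj b * z)

variable {b z : ℂ}

theorem one_sub_norm_sq_pos {E : Type*} [SeminormedAddGroup E] {z : E} (hz : ‖z‖ < 1) :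
    0 < 1 - ‖z‖ ^ 2 :=
  sub_pos.2 (pow_lt_one₀ (norm_nonneg z) hz two_ne_zero)

theorem norm_sub_lt_norm_one_sub_conj_mul (hb : ‖b‖ < 1) (hz : ‖z‖ < 1) :
    ‖z - b‖ < ‖1 - conj b * z‖ := by
  refine lt_of_pow_lt_pow_left₀ 2 (norm_nonneg _) (sub_pos.1 ?_)
  rw [norm_one_sub_conj_mul_sq_sub_norm_sub_sq]
  exact mul_pos (one_sub_norm_sq_pos hb) (one_sub_norm_sq_pos hz)

theorem one_sub_conj_mul_ne_zero (hb : ‖b‖ < 1) (hz : ‖z‖ < 1) : 1 - conj b * z ≠ 0 :=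
  norm_pos_iff.1 ((norm_nonneg _).trans_lt (norm_sub_lt_norm_one_sub_conj_mul hb hz))

theorem discAut_self (b : ℂ) : discAut b b = 0 := by
  simp [discAut]

theorem norm_discAut_lt_one (hb : ‖b‖ < 1) (hz : ‖z‖ < 1) : ‖discAut b z‖ < 1 := by
  rw [discAut, norm_div, div_lt_one (norm_pos_iff.2 (one_sub_conj_mul_ne_zero hb hz))]
  exact norm_sub_lt_norm_one_sub_conj_mul hb hz

theorem differentiableAt_discAut (hb : ‖b‖ < 1) (hz : ‖z‖ < 1) :
    DifferentiableAt ℂ (discAut b) z := by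
  unfold discAut
  have := one_sub_conj_mul_ne_zero hb hz
  fun_prop (disch := assumption)

theorem hasDerivAt_discAut_self (hb : ‖b‖ < 1) :
    HasDerivAt (discAut b) ((1 - ‖b‖ ^ 2 : ℝ) : ℂ)⁻¹ b := by
  have hden := one_sub_conj_mul_ne_zero hb hb
  have hquot := ((hasDerivAt_id b).sub_const b).div
    ((hasDerivAt_const_mul (conj b)).const_sub 1) hden
  refine hquot.congr_deriv ?_
  push_cast
  rw [← conj_mul']
  simp only [id_eq]
  field_simp
  ring

theorem hypDensity_le_one_div {φ : ℂ → ℂ} {r : ℝ} (hr : 0 < r)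
    (hφ : DifferentiableOn ℂ φ (ball z r)) (hmaps : MapsTo φ (ball z r) (ball 0 1)) :
    hypDensity φ z ≤ 1 / r := by
  have hnorm (w : ℂ) (hw : w ∈ ball z r) : ‖φ w‖ < 1 := mem_ball_zero_iff.1 (hmaps hw)
  have hz : z ∈ ball z r := mem_ball_self hr
  have hcomp : HasDerivAt (discAut (φ z) ∘ φ) (((1 - ‖φ z‖ ^ 2 : ℝ) : ℂ)⁻¹ * deriv φ z) z :=
    (hasDerivAt_discAut_self (hnorm z hz)).comp z
      (hφ.differentiableAt (isOpen_ball.mem_nhds hz)).hasDerivAt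
  have hschwarz : ‖deriv (discAut (φ z) ∘ φ) z‖ ≤ 1 / r := by
    refine norm_deriv_le_div_of_mapsTo_ball (fun w hw => ?_) (fun w hw => ?_) hr
    · exact (differentiableAt_discAut (hnorm z hz) (hnorm w hw)).comp_differentiableWithinAt w
        (hφ w hw)
    · rw [Function.comp_apply, Function.comp_apply, discAut_self, mem_closedBall_zero_iff]
      exact (norm_discAut_lt_one (hnorm z hz) (hnorm w hw)).le
  rwa [hcomp.deriv, norm_mul, norm_inv, norm_real,
    Real.norm_of_nonneg (one_sub_norm_sq_pos (hnorm z hz)).le, inv_mul_eq_div] at hschwarz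

end SchwarzPick

section HypDensity

variable {U Q : Set ℂ} {φ : ℂ → ℂ}

theorem hypDensity_nonneg (hmaps : MapsTo φ U (ball 0 1)) : ∀ z ∈ U, 0 ≤ hypDensity φ z :=
  fun _ hz => div_nonneg (norm_nonneg _) (one_sub_norm_sq_pos (mem_ball_zero_iff.1 (hmaps hz))).le

theorem continuousOn_hypDensity (hU : IsOpen U) (hφ : DifferentiableOn ℂ φ U)
    (hmaps : MapsTo φ U (ball 0 1)) : ContinuousOn (hypDensity φ) U :=
  (hφ.deriv hU).continuousOn.norm.div (continuousOn_const.sub (hφ.continuousOn.norm.pow 2))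
    fun _ hz => (one_sub_norm_sq_pos (mem_ball_zero_iff.1 (hmaps hz))).ne'

theorem lineMap_mem_pathsIn (hQ : Convex ℝ Q) {z w : ℂ} (hz : z ∈ Q) (hw : w ∈ Q) :
    (fun t : ℝ => AffineMap.lineMap z w t) ∈ PathsIn Q z w :=
  ⟨AffineMap.contDiff_lineMap z w, AffineMap.lineMap_apply_zero z w,
    AffineMap.lineMap_apply_one z w, fun _ ht => hQ.lineMap_mem hz hw ht⟩

theorem pathsIn_mono {D : Set ℂ} (hQU : Q ⊆ D) (z w : ℂ) : PathsIn Q z w ⊆ PathsIn D z w :=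
  fun _ hγ => ⟨hγ.1, hγ.2.1, hγ.2.2.1, fun t ht => hQU (hγ.2.2.2 t ht)⟩

theorem pathLen_lineMap_le {ρ : ℂ → ℝ} {M : ℝ} {z w : ℂ} (hQ : Convex ℝ Q) (hz : z ∈ Q)
    (hw : w ∈ Q) (hnonneg : ∀ v ∈ Q, 0 ≤ ρ v) (hM : ∀ v ∈ Q, ρ v ≤ M) :
    pathLen ρ (fun t : ℝ => AffineMap.lineMap z w t) ≤ M * dist z w := by
  have hpath := lineMap_mem_pathsIn hQ hz hw
  have hderiv (t : ℝ) : ‖deriv (fun t : ℝ => AffineMap.lineMap z w t) t‖ = dist z w := by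
    rw [AffineMap.hasDerivAt_lineMap.deriv, dist_eq_norm']
  have hbound (t : ℝ) (ht : t ∈ uIoc 0 1) :
      ‖ρ (AffineMap.lineMap z w t) * ‖deriv (fun t : ℝ => AffineMap.lineMap z w t) t‖‖ ≤
        M * dist z w := by
    have hmem := hpath.2.2.2 t (Ioc_subset_Icc_self (uIoc_of_le (zero_le_one' ℝ) ▸ ht))
    rw [hderiv, Real.norm_of_nonneg (mul_nonneg (hnonneg _ hmem) dist_nonneg)]
    exact mul_le_mul_of_nonneg_right (hM _ hmem) dist_nonneg
  have h := intervalIntegral.norm_integral_le_of_norm_le_const hbound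
  rw [sub_zero, abs_one, mul_one] at h
  exact (le_abs_self _).trans h

theorem distHyp_le_dist_div (hφ : DifferentiableOn ℂ φ U) (hmaps : MapsTo φ U (ball 0 1))
    (hQ : Convex ℝ Q) {r : ℝ} (hr : 0 < r) (hball : ∀ v ∈ Q, ball v r ⊆ U) {z w : ℂ}
    (hz : z ∈ Q) (hw : w ∈ Q) : distHyp φ U z w ≤ dist z w / r := by
  have hQU : Q ⊆ U := fun v hv => hball v hv (mem_ball_self hr)
  calc distHyp φ U z w ≤ pathLen (hypDensity φ) (fun t : ℝ => AffineMap.lineMap z w t) :=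
        confDist_le_pathLen (hypDensity_nonneg hmaps)
          (pathsIn_mono hQU z w (lineMap_mem_pathsIn hQ hz hw))
    _ ≤ 1 / r * dist z w := pathLen_lineMap_le hQ hz hw
        (fun v hv => hypDensity_nonneg hmaps v (hQU hv)) fun v hv =>
          hypDensity_le_one_div hr (hφ.mono (hball v hv)) (hmaps.mono_left (hball v hv))
    _ = dist z w / r := one_div_mul_eq_div _ _

end HypDensity

section Geodesic

/-- `ψ` maps the unit disc biholomorphically onto the open set `U`, with inverse `φ`. -/
structure IsRiemannMap (U : Set ℂ) (φ ψ : ℂ → ℂ) : Prop where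
  isOpen : IsOpen U
  differentiableOn_inv : DifferentiableOn ℂ φ U
  differentiableOn : DifferentiableOn ℂ ψ (ball 0 1)
  bijOn : BijOn ψ (ball 0 1) U
  leftInvOn : LeftInvOn φ ψ (ball 0 1)

variable {U : Set ℂ} {φ ψ : ℂ → ℂ} {ζ : ℂ} {u v : ℝ}

namespace IsRiemannMap

theorem mapsTo_inv (h : IsRiemannMap U φ ψ) : MapsTo φ U (ball 0 1) :=
  h.leftInvOn.mapsTo h.bijOn.surjOn

theorem deriv_inv_mul_deriv (h : IsRiemannMap U φ ψ) {w : ℂ} (hw : w ∈ ball 0 1) :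
    deriv φ (ψ w) * deriv ψ w = 1 := by
  have hφ := h.differentiableOn_inv.differentiableAt (h.isOpen.mem_nhds (h.bijOn.mapsTo hw))
  have hψ := h.differentiableOn.differentiableAt (isOpen_ball.mem_nhds hw)
  have hid : φ ∘ ψ =ᶠ[nhds w] id :=
    h.leftInvOn.eqOn.eventuallyEq_of_mem (isOpen_ball.mem_nhds hw)
  rw [← deriv_comp w hφ hψ, hid.deriv_eq, deriv_id]

theorem hypDensity_mul_norm_deriv (h : IsRiemannMap U φ ψ) {w : ℂ} (hw : w ∈ ball 0 1) :
    hypDensity φ (ψ w) * ‖deriv ψ w‖ = 1 / (1 - ‖w‖ ^ 2) := by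
  rw [hypDensity, h.leftInvOn hw, div_mul_eq_mul_div, ← norm_mul, h.deriv_inv_mul_deriv hw,
    norm_one]

end IsRiemannMap

/-- The hyperbolic geodesic of `ψ(𝔻)` issuing from `ψ 0` in the direction `ζ`, parameterized by
hyperbolic length. -/
def hypGeodesic (ψ : ℂ → ℂ) (ζ : ℂ) (u : ℝ) : ℂ := ψ ((Real.tanh u : ℝ) * ζ)

theorem norm_tanh_mul (hζ : ‖ζ‖ = 1) (u : ℝ) : ‖(Real.tanh u : ℝ) * ζ‖ = |Real.tanh u| := by
  rw [norm_mul, hζ, mul_one, norm_real, Real.norm_eq_abs]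

theorem tanh_mul_mem_ball (hζ : ‖ζ‖ = 1) (u : ℝ) : (Real.tanh u : ℝ) * ζ ∈ ball (0 : ℂ) 1 := by
  rw [mem_ball_zero_iff, norm_tanh_mul hζ]
  exact Real.abs_tanh_lt_one u

theorem hypGeodesic_zero (ψ : ℂ → ℂ) (ζ : ℂ) : hypGeodesic ψ ζ 0 = ψ 0 := by
  simp [hypGeodesic]

theorem hasDerivAt_hypGeodesic (hψ : DifferentiableOn ℂ ψ (ball 0 1)) (hζ : ‖ζ‖ = 1) (u : ℝ) :
    HasDerivAt (hypGeodesic ψ ζ)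
      (deriv ψ ((Real.tanh u : ℝ) * ζ) * (((1 - Real.tanh u ^ 2 : ℝ) : ℂ) * ζ)) u :=
  (hψ.differentiableAt (isOpen_ball.mem_nhds (tanh_mul_mem_ball hζ u))).hasDerivAt.comp_of_eq u
    ((hasDerivAt_tanh u).ofReal_comp.mul_const ζ) rfl

theorem norm_deriv_hypGeodesic (hψ : DifferentiableOn ℂ ψ (ball 0 1)) (hζ : ‖ζ‖ = 1) (u : ℝ) :
    ‖deriv (hypGeodesic ψ ζ) u‖ =
      ‖deriv ψ ((Real.tanh u : ℝ) * ζ)‖ * (1 - Real.tanh u ^ 2) := by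
  have hpos : 0 < 1 - Real.tanh u ^ 2 := sub_pos.2 (Real.tanh_sq_lt_one u)
  rw [(hasDerivAt_hypGeodesic hψ hζ u).deriv, norm_mul, norm_mul, hζ, mul_one, norm_real,
    Real.norm_of_nonneg hpos.le]

theorem contDiff_hypGeodesic (hψ : DifferentiableOn ℂ ψ (ball 0 1)) (hζ : ‖ζ‖ = 1) :
    ContDiff ℝ 1 (hypGeodesic ψ ζ) := by
  have hψ' : ContDiffOn ℝ 1 ψ (ball 0 1) := (hψ.contDiffOn isOpen_ball).restrict_scalars ℝ
  have hray : ContDiff ℝ 1 fun u : ℝ => ((Real.tanh u : ℝ) : ℂ) * ζ :=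
    (ofRealCLM.contDiff.comp contDiff_tanh).mul contDiff_const
  exact hψ'.comp_contDiff hray (tanh_mul_mem_ball hζ)

namespace IsRiemannMap

theorem hypGeodesic_mem (h : IsRiemannMap U φ ψ) (hζ : ‖ζ‖ = 1) (u : ℝ) :
    hypGeodesic ψ ζ u ∈ U :=
  h.bijOn.mapsTo (tanh_mul_mem_ball hζ u)

theorem hypDensity_hypGeodesic_mul_norm_deriv (h : IsRiemannMap U φ ψ) (hζ : ‖ζ‖ = 1) (u : ℝ) :
    hypDensity φ (hypGeodesic ψ ζ u) * ‖deriv (hypGeodesic ψ ζ) u‖ = 1 := by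
  have hne : 1 - Real.tanh u ^ 2 ≠ 0 := (sub_pos.2 (Real.tanh_sq_lt_one u)).ne'
  rw [norm_deriv_hypGeodesic h.differentiableOn hζ, ← mul_assoc, hypGeodesic,
    h.hypDensity_mul_norm_deriv (tanh_mul_mem_ball hζ u), norm_tanh_mul hζ, sq_abs,
    one_div_mul_cancel hne]

theorem hypGeodesic_lineMap_mem_pathsIn (h : IsRiemannMap U φ ψ) (hζ : ‖ζ‖ = 1) (u v : ℝ) :
    (fun t => hypGeodesic ψ ζ (AffineMap.lineMap u v t)) ∈
      PathsIn U (hypGeodesic ψ ζ u) (hypGeodesic ψ ζ v) := by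
  exact ⟨(contDiff_hypGeodesic h.differentiableOn hζ).comp (AffineMap.contDiff_lineMap u v),
    congrArg _ (AffineMap.lineMap_apply_zero u v), congrArg _ (AffineMap.lineMap_apply_one u v),
    fun t _ => h.hypGeodesic_mem hζ _⟩

theorem pathLen_hypGeodesic_lineMap (h : IsRiemannMap U φ ψ) (hζ : ‖ζ‖ = 1) (u v : ℝ) :
    pathLen (hypDensity φ) (fun t => hypGeodesic ψ ζ (AffineMap.lineMap u v t)) = |v - u| := by
  have hspeed (t : ℝ) :
      hypDensity φ (hypGeodesic ψ ζ (AffineMap.lineMap u v t)) *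
        ‖deriv (fun t => hypGeodesic ψ ζ (AffineMap.lineMap u v t)) t‖ = |v - u| := by
    have hγ := (contDiff_hypGeodesic h.differentiableOn hζ).differentiable one_ne_zero
      (AffineMap.lineMap u v t)
    have hcomp := hγ.hasDerivAt.scomp t (AffineMap.hasDerivAt_lineMap (a := u) (b := v))
    have hderiv : deriv (fun t => hypGeodesic ψ ζ (AffineMap.lineMap u v t)) t =
        (v - u) • deriv (hypGeodesic ψ ζ) (AffineMap.lineMap u v t) := hcomp.deriv
    rw [hderiv, norm_smul, mul_left_comm, h.hypDensity_hypGeodesic_mul_norm_deriv hζ, mul_one,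
      Real.norm_eq_abs]
  simp only [pathLen, hspeed, intervalIntegral.integral_const, sub_zero, one_smul]

end IsRiemannMap

/-- The hyperbolic arclength parameter of the Euclidean orthogonal projection of `φ z` to the
diameter `ℝζ` of the disc: a coordinate on `U` restricting to the parameter on `hypGeodesic ψ ζ`
and changing at most at unit hyperbolic speed. -/
def geodesicCoord (φ : ℂ → ℂ) (ζ z : ℂ) : ℝ := Real.artanh (φ z * conj ζ).re

theorem abs_re_mul_conj_le (hζ : ‖ζ‖ = 1) (w : ℂ) : |(w * conj ζ).re| ≤ ‖w‖ :=
  (abs_re_le_norm _).trans_eq (by rw [norm_mul, RCLike.norm_conj, hζ, mul_one])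

namespace IsRiemannMap

theorem geodesicCoord_hypGeodesic (h : IsRiemannMap U φ ψ) (hζ : ‖ζ‖ = 1) (u : ℝ) :
    geodesicCoord φ ζ (hypGeodesic ψ ζ u) = u := by
  have hre : ((Real.tanh u : ℝ) * ζ * conj ζ : ℂ).re = Real.tanh u := by
    rw [mul_assoc, mul_conj', hζ, ofReal_one, one_pow, mul_one, ofReal_re]
  rw [geodesicCoord, hypGeodesic, h.leftInvOn (tanh_mul_mem_ball hζ u), hre, Real.artanh_tanh]

theorem hasDerivAt_geodesicCoord_comp (h : IsRiemannMap U φ ψ) (hζ : ‖ζ‖ = 1) {η : ℝ → ℂ} {t : ℝ}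
    (hη : DifferentiableAt ℝ η t) (ht : η t ∈ U) :
    HasDerivAt (geodesicCoord φ ζ ∘ η)
      ((deriv φ (η t) * deriv η t * conj ζ).re / (1 - (φ (η t) * conj ζ).re ^ 2)) t := by
  have hφ := (h.differentiableOn_inv.differentiableAt (h.isOpen.mem_nhds ht)).hasDerivAt
  have hre : HasDerivAt (fun s => (φ (η s) * conj ζ).re)
      (deriv φ (η t) * deriv η t * conj ζ).re t :=
    reCLM.hasFDerivAt.comp_hasDerivAt t
      ((hφ.comp_of_eq t hη.hasDerivAt rfl).mul_const (conj ζ))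
  have hlt : |(φ (η t) * conj ζ).re| < 1 :=
    (abs_re_mul_conj_le hζ _).trans_lt (mem_ball_zero_iff.1 (h.mapsTo_inv ht))
  exact ((hasDerivAt_artanh (abs_lt.1 hlt)).comp_of_eq t hre rfl).congr_deriv
    (one_div_mul_eq_div _ _)

theorem norm_deriv_geodesicCoord_comp_le (h : IsRiemannMap U φ ψ) (hζ : ‖ζ‖ = 1) {η : ℝ → ℂ}
    {t : ℝ} (hη : DifferentiableAt ℝ η t) (ht : η t ∈ U) :
    ‖deriv (geodesicCoord φ ζ ∘ η) t‖ ≤ hypDensity φ (η t) * ‖deriv η t‖ := by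
  have hpos := one_sub_norm_sq_pos (mem_ball_zero_iff.1 (h.mapsTo_inv ht))
  have hle : 1 - ‖φ (η t)‖ ^ 2 ≤ 1 - (φ (η t) * conj ζ).re ^ 2 :=
    sub_le_sub_left (sq_le_sq.2 ((abs_re_mul_conj_le hζ _).trans (le_abs_self _))) 1
  calc ‖deriv (geodesicCoord φ ζ ∘ η) t‖
      = |(deriv φ (η t) * deriv η t * conj ζ).re| / (1 - (φ (η t) * conj ζ).re ^ 2) := by
        rw [(h.hasDerivAt_geodesicCoord_comp hζ hη ht).deriv, Real.norm_eq_abs, abs_div,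
          abs_of_pos (hpos.trans_le hle)]
    _ ≤ ‖deriv φ (η t) * deriv η t‖ / (1 - ‖φ (η t)‖ ^ 2) :=
        div_le_div₀ (norm_nonneg _) (abs_re_mul_conj_le hζ _) hpos hle
    _ = hypDensity φ (η t) * ‖deriv η t‖ := by
        rw [norm_mul, hypDensity, div_mul_eq_mul_div]

theorem abs_geodesicCoord_sub_le_pathLen (h : IsRiemannMap U φ ψ) (hζ : ‖ζ‖ = 1) {z w : ℂ}
    {η : ℝ → ℂ} (hη : η ∈ PathsIn U z w) :
    |geodesicCoord φ ζ w - geodesicCoord φ ζ z| ≤ pathLen (hypDensity φ) η := by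
  obtain ⟨hsmooth, hη₀, hη₁, hηU⟩ := id hη
  have hderiv (t : ℝ) (ht : t ∈ Icc (0 : ℝ) 1) :=
    h.hasDerivAt_geodesicCoord_comp hζ (hsmooth.differentiable one_ne_zero t) (hηU t ht)
  have hint : IntervalIntegrable (fun t => hypDensity φ (η t) * ‖deriv η t‖) volume 0 1 :=
    (continuousOn_density_mul_norm_deriv (continuousOn_hypDensity h.isOpen h.differentiableOn_inv
      h.mapsTo_inv) hη).intervalIntegrable_of_Icc zero_le_one
  have hle := norm_sub_le_integral_of_norm_deriv_le_of_le zero_le_one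
    (fun t ht => (hderiv t ht).continuousAt.continuousWithinAt)
    (fun t ht => (hderiv t (Ioo_subset_Icc_self ht)).differentiableAt.differentiableWithinAt)
    (ae_of_all _ fun t ht => h.norm_deriv_geodesicCoord_comp_le hζ
      (hsmooth.differentiable one_ne_zero t) (hηU t (Ioo_subset_Icc_self ht))) hint
  rwa [Function.comp_apply, Function.comp_apply, hη₀, hη₁] at hle

theorem distHyp_hypGeodesic (h : IsRiemannMap U φ ψ) (hζ : ‖ζ‖ = 1) (u v : ℝ) :
    distHyp φ U (hypGeodesic ψ ζ u) (hypGeodesic ψ ζ v) = |v - u| := by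
  have hpath := h.hypGeodesic_lineMap_mem_pathsIn hζ u v
  refine le_antisymm ?_ (le_csInf ⟨_, mem_image_of_mem _ hpath⟩ ?_)
  · exact (confDist_le_pathLen (hypDensity_nonneg h.mapsTo_inv) hpath).trans_eq
      (h.pathLen_hypGeodesic_lineMap hζ u v)
  · rintro _ ⟨η, hη, rfl⟩
    have hlow := h.abs_geodesicCoord_sub_le_pathLen hζ hη
    rwa [h.geodesicCoord_hypGeodesic hζ, h.geodesicCoord_hypGeodesic hζ] at hlow

end IsRiemannMap

end Geodesic

section Bloch

variable {f : ℂ → ℂ} {c : ℂ} {r : ℝ}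

theorem norm_sub_le_norm_image_sub_of_norm_deriv_sub_le {s : Set ℂ} (hs : Convex ℝ s)
    (hc : c ∈ s) (hf : ∀ z ∈ s, DifferentiableAt ℂ f z) {C : ℝ}
    (hC : ∀ z ∈ s, ‖deriv f z - deriv f c‖ ≤ C) {z : ℂ} (hz : z ∈ s) :
    (‖deriv f c‖ - C) * ‖z - c‖ ≤ ‖f z - f c‖ := by
  have hderiv (w : ℂ) (hw : w ∈ s) :
      HasDerivWithinAt (fun w => f w - deriv f c * w) (deriv f w - deriv f c) s w :=
    ((hf w hw).hasDerivAt.sub (hasDerivAt_const_mul (deriv f c))).hasDerivWithinAt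
  have herror := hs.norm_image_sub_le_of_norm_hasDerivWithin_le hderiv hC hc hz
  have hlinear : ‖deriv f c‖ * ‖z - c‖ ≤
      ‖f z - f c‖ + ‖(f z - deriv f c * z) - (f c - deriv f c * c)‖ := by
    rw [← norm_mul]
    exact (congrArg norm (by ring)).trans_le (norm_sub_le _ _)
  linarith

theorem ball_subset_image_closedBall_of_norm_deriv_sub_le (hr : 0 < r)
    (hf : ∀ z ∈ closedBall c r, DifferentiableAt ℂ f z)
    (hderiv : ∀ z ∈ closedBall c r, ‖deriv f z - deriv f c‖ ≤ ‖deriv f c‖ / 2) :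
    ball (f c) (‖deriv f c‖ * r / 4) ⊆ f '' closedBall c r := by
  rcases eq_or_ne (deriv f c) 0 with hzero | hne
  · simp [hzero]
  have hcenter : c ∈ closedBall c r := mem_closedBall_self hr.le
  have hsphere (z : ℂ) (hz : z ∈ sphere c r) : ‖deriv f c‖ * r / 2 ≤ ‖f z - f c‖ := by
    have h := norm_sub_le_norm_image_sub_of_norm_deriv_sub_le (convex_closedBall c r) hcenter hf
      hderiv (sphere_subset_closedBall hz)
    rw [mem_sphere_iff_norm.1 hz] at h
    linarith
  have hdiff : DiffContOnCl ℂ f (ball c r) := by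
    refine DifferentiableOn.diffContOnCl fun z hz => ?_
    rw [closure_ball c hr.ne'] at hz
    exact (hf z hz).differentiableWithinAt
  have hnonconst : ∃ᶠ z in nhds c, f z ≠ f c :=
    ((hf c hcenter).hasDerivAt.eventually_ne hne).frequently.filter_mono nhdsWithin_le_nhds
  have h := hdiff.ball_subset_image_closedBall hr hsphere hnonconst
  rwa [show ‖deriv f c‖ * r / 2 / 2 = ‖deriv f c‖ * r / 4 by ring] at h

theorem ball_subset_image_ball_of_norm_deriv_le (hf : DifferentiableOn ℂ f (ball c r))
    (hderiv : ∀ z ∈ ball c r, ‖deriv f z‖ ≤ 2 * ‖deriv f c‖) :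
    ball (f c) (‖deriv f c‖ * r / 24) ⊆ f '' ball c r := by
  rcases le_or_gt r 0 with hr | hr
  · rw [ball_eq_empty.2 (by nlinarith [norm_nonneg (deriv f c)])]
    exact empty_subset _
  have hsub : closedBall c (r / 6) ⊆ ball c r := closedBall_subset_ball (by linarith)
  have hmaps : MapsTo (deriv f) (ball c r) (closedBall (deriv f c) (3 * ‖deriv f c‖)) := by
    intro z hz
    rw [mem_closedBall_iff_norm]
    linarith [norm_sub_le (deriv f z) (deriv f c), hderiv z hz]
  have hosc (z : ℂ) (hz : z ∈ closedBall c (r / 6)) :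
      ‖deriv f z - deriv f c‖ ≤ ‖deriv f c‖ / 2 := by
    have hz' : dist z c ≤ r / 6 := hz
    calc ‖deriv f z - deriv f c‖ ≤ 3 * ‖deriv f c‖ / r * dist z c := by
          rw [← dist_eq_norm]
          exact Complex.dist_le_div_mul_dist_of_mapsTo_ball (hf.deriv isOpen_ball) hmaps (hsub hz)
      _ ≤ 3 * ‖deriv f c‖ / r * (r / 6) := by gcongr
      _ = ‖deriv f c‖ / 2 := by field_simp; ring
  have himage := ball_subset_image_closedBall_of_norm_deriv_sub_le (by linarith)
    (fun z hz => hf.differentiableAt (isOpen_ball.mem_nhds (hsub hz))) hosc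
  rw [show ‖deriv f c‖ * (r / 6) / 4 = ‖deriv f c‖ * r / 24 by ring] at himage
  exact himage.trans (image_mono hsub)

-- Maximising `‖f' z‖ * (r / 2 - dist z c)` produces a point around which `f'` at most doubles.
theorem exists_ball_subset_image_ball (hr : 0 < r) (hf : DifferentiableOn ℂ f (ball c r)) :
    ∃ z ∈ ball c r, ball (f z) (‖deriv f c‖ * r / 96) ⊆ f '' ball c r := by
  have hsub : closedBall c (r / 2) ⊆ ball c r := closedBall_subset_ball (by linarith)
  have hcenter : c ∈ closedBall c (r / 2) := mem_closedBall_self (by linarith)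
  obtain ⟨z, hz, hmax⟩ := (isCompact_closedBall c (r / 2)).exists_isMaxOn
    (f := fun z => ‖deriv f z‖ * (r / 2 - dist z c)) ⟨c, hcenter⟩
    (((hf.deriv isOpen_ball).continuousOn.mono hsub).norm.mul (by fun_prop))
  have hz' : dist z c ≤ r / 2 := hz
  obtain ⟨ρ, hρ⟩ : ∃ ρ, r / 2 - dist z c = 2 * ρ := ⟨(r / 2 - dist z c) / 2, by ring⟩
  have hmax' (w : ℂ) (hw : w ∈ closedBall c (r / 2)) :
      ‖deriv f w‖ * (r / 2 - dist w c) ≤ 2 * ‖deriv f z‖ * ρ :=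
    (hmax hw).trans_eq (by simp only [hρ]; ring)
  have hball : ball z ρ ⊆ closedBall c (r / 2) :=
    ball_subset_closedBall.trans (closedBall_subset_closedBall' (by linarith))
  have hderiv (w : ℂ) (hw : w ∈ ball z ρ) : ‖deriv f w‖ ≤ 2 * ‖deriv f z‖ := by
    have hwz : dist w z < ρ := hw
    have hρw : ρ ≤ r / 2 - dist w c := by linarith [dist_triangle w z c]
    refine le_of_mul_le_mul_right ?_ (dist_nonneg.trans_lt hwz)
    calc ‖deriv f w‖ * ρ ≤ ‖deriv f w‖ * (r / 2 - dist w c) := by gcongr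
      _ ≤ 2 * ‖deriv f z‖ * ρ := hmax' w (hball hw)
  have hradius : ‖deriv f c‖ * r / 96 ≤ ‖deriv f z‖ * ρ / 24 := by
    have hmaxc := hmax' c hcenter
    rw [dist_self] at hmaxc
    linarith
  refine ⟨z, hsub hz, (ball_subset_ball hradius).trans ?_⟩
  exact (ball_subset_image_ball_of_norm_deriv_le (hf.mono (hball.trans hsub)) hderiv).trans
    (image_mono (hball.trans hsub))

theorem exists_eq_exp_of_ne_zero (hf : DifferentiableOn ℂ f (ball c r))
    (hne : ∀ z ∈ ball c r, f z ≠ 0) :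
    ∃ h : ℂ → ℂ, (∀ z ∈ ball c r, f z = exp (h z)) ∧
      ∀ z ∈ ball c r, HasDerivAt h (deriv f z / f z) z := by
  rcases le_or_gt r 0 with hr | hr
  · simp [ball_eq_empty.2 hr]
  have hcenter : c ∈ ball c r := mem_ball_self hr
  obtain ⟨h, hhc, hh⟩ : ∃ h : ℂ → ℂ, h c = log (f c) ∧
      ∀ z ∈ ball c r, HasDerivAt h (deriv f z / f z) z :=
    ((hf.deriv isOpen_ball).div hf hne).isExactOn_ball.with_val_at c (log (f c))
  refine ⟨h, ?_, hh⟩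
  have hquot (z : ℂ) (hz : z ∈ ball c r) : HasDerivAt (fun z => f z * exp (-h z)) 0 z := by
    have hfz := (hf.differentiableAt (isOpen_ball.mem_nhds hz)).hasDerivAt
    refine (hfz.mul (hh z hz).neg.cexp).congr_deriv ?_
    have := hne z hz
    simp only [Pi.neg_apply]
    field_simp
    ring
  intro z hz
  have hconst : f z * exp (-h z) = f c * exp (-h c) :=
    isOpen_ball.is_const_of_deriv_eq_zero (convex_ball c r).isPreconnected
      (fun w hw => (hquot w hw).differentiableAt.differentiableWithinAt)
      (fun w hw => (hquot w hw).deriv) hz hcenter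
  rw [hhc, exp_neg (log _), exp_log (hne c hcenter), mul_inv_cancel₀ (hne c hcenter), exp_neg]
    at hconst
  exact (mul_inv_eq_one₀ (exp_ne_zero _)).1 hconst

-- The image of a branch `h` of `log (f - x)` contains no two points differing by `2πi`, because
-- `exp ∘ h` is injective; so it contains no disc of radius larger than `2π`.
theorem norm_deriv_mul_le_of_injOn_of_notMem_image (hr : 0 < r)
    (hf : DifferentiableOn ℂ f (ball c r)) (hinj : InjOn f (ball c r)) {x : ℂ}
    (hx : x ∉ f '' ball c r) :
    ‖deriv f c‖ * r ≤ 192 * Real.pi * ‖f c - x‖ := by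
  have hne (z : ℂ) (hz : z ∈ ball c r) : f z - x ≠ 0 :=
    sub_ne_zero.2 fun h => hx ⟨z, hz, h⟩
  obtain ⟨h, hexp, hh⟩ := exists_eq_exp_of_ne_zero (hf.sub_const x) hne
  simp only [deriv_sub_const] at hexp hh
  have hhdiff : DifferentiableOn ℂ h (ball c r) := fun z hz =>
    (hh z hz).differentiableAt.differentiableWithinAt
  have homit (z : ℂ) (hz : z ∈ ball c r) : h z + 2 * Real.pi * I ∉ h '' ball c r := by
    rintro ⟨w, hw, hwz⟩
    have hfw : f w - x = f z - x := by
      rw [hexp w hw, hexp z hz, hwz, exp_add, exp_two_pi_mul_I, mul_one]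
    rw [hinj hw hz (sub_left_injective hfw)] at hwz
    exact two_pi_I_ne_zero (left_eq_add.1 hwz)
  obtain ⟨z, hz, hball⟩ := exists_ball_subset_image_ball hr hhdiff
  have hlog : ‖deriv h c‖ * r ≤ 192 * Real.pi := by
    have hfar : ‖deriv h c‖ * r / 96 ≤ dist (h z + 2 * Real.pi * I) (h z) :=
      not_lt.1 fun hlt => homit z hz (hball hlt)
    rw [dist_self_add_left] at hfar
    simp only [norm_mul, norm_I, norm_ofNat, norm_real, Real.norm_eq_abs,
      abs_of_pos Real.pi_pos] at hfar
    linarith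
  have hcenter : c ∈ ball c r := mem_ball_self hr
  rw [(hh c hcenter).deriv, norm_div, div_mul_eq_mul_div,
    div_le_iff₀ (norm_pos_iff.2 (hne c hcenter))] at hlog
  exact hlog

end Bloch

section Gronwall

variable {E : Type*} [NormedAddCommGroup E] [NormedSpace ℝ E] {γ : ℝ → E} {x : E} {C L : ℝ}

theorem norm_sub_le_mul_exp_of_norm_deriv_le (hγ : Differentiable ℝ γ)
    (hderiv : ∀ u, ‖deriv γ u‖ ≤ C * ‖γ u - x‖) {u : ℝ} (hu : 0 ≤ u) :
    ‖γ u - x‖ ≤ ‖γ 0 - x‖ * Real.exp (C * u) := by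
  have hgronwall := norm_le_gronwallBound_of_norm_deriv_right_le (f := fun u => γ u - x)
    (ε := 0) (hγ.continuous.sub continuous_const).continuousOn
    (fun v _ => ((hγ v).hasDerivAt.sub_const x).hasDerivWithinAt) le_rfl
    (fun v _ => (hderiv v).trans_eq (add_zero _).symm) u ⟨hu, le_rfl⟩
  rwa [gronwallBound_ε0, sub_zero] at hgronwall

theorem integral_norm_deriv_le_of_norm_deriv_le (hC : 0 ≤ C) (hL : 0 ≤ L)
    (hγ : Differentiable ℝ γ) (hderiv : ∀ u, ‖deriv γ u‖ ≤ C * ‖γ u - x‖) :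
    ∫ u in (0 : ℝ)..L, ‖deriv γ u‖ ≤ C * (‖γ 0 - x‖ * Real.exp (C * L)) * L := by
  have hbound (u : ℝ) (hu : u ∈ uIoc 0 L) :
      ‖‖deriv γ u‖‖ ≤ C * (‖γ 0 - x‖ * Real.exp (C * L)) := by
    rw [uIoc_of_le hL] at hu
    rw [norm_norm]
    refine (hderiv u).trans (mul_le_mul_of_nonneg_left ?_ hC)
    refine (norm_sub_le_mul_exp_of_norm_deriv_le hγ hderiv hu.1.le).trans ?_
    gcongr
    exact hu.2
  have hint := intervalIntegral.norm_integral_le_of_norm_le_const hbound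
  rw [sub_zero, abs_of_nonneg hL] at hint
  exact (le_abs_self _).trans hint

end Gronwall

section KoebeAlongGeodesic

variable {U : Set ℂ} {φ ψ : ℂ → ℂ} {ζ x : ℂ}

namespace IsRiemannMap

theorem norm_deriv_mul_one_sub_norm_le (h : IsRiemannMap U φ ψ) (hx : x ∉ U) {w : ℂ}
    (hw : w ∈ ball 0 1) : ‖deriv ψ w‖ * (1 - ‖w‖) ≤ 192 * Real.pi * ‖ψ w - x‖ := by
  have hball : ball w (1 - ‖w‖) ⊆ ball 0 1 := ball_subset_ball' (by simp)
  exact norm_deriv_mul_le_of_injOn_of_notMem_image (sub_pos.2 (mem_ball_zero_iff.1 hw))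
    (h.differentiableOn.mono hball) (h.bijOn.injOn.mono hball)
    fun hmem => hx (h.bijOn.mapsTo.mono_left hball |>.image_subset hmem)

theorem norm_deriv_hypGeodesic_le (h : IsRiemannMap U φ ψ) (hζ : ‖ζ‖ = 1) (hx : x ∉ U) (u : ℝ) :
    ‖deriv (hypGeodesic ψ ζ) u‖ ≤ 384 * Real.pi * ‖hypGeodesic ψ ζ u - x‖ := by
  have hkoebe := h.norm_deriv_mul_one_sub_norm_le hx (tanh_mul_mem_ball hζ u)
  have htanh := Real.abs_tanh_lt_one u
  rw [norm_tanh_mul hζ] at hkoebe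
  calc ‖deriv (hypGeodesic ψ ζ) u‖
      = ‖deriv ψ ((Real.tanh u : ℝ) * ζ)‖ * (1 - |Real.tanh u|) * (1 + |Real.tanh u|) := by
        rw [norm_deriv_hypGeodesic h.differentiableOn hζ, ← sq_abs]
        ring
    _ ≤ 192 * Real.pi * ‖hypGeodesic ψ ζ u - x‖ * 2 :=
        mul_le_mul hkoebe (by linarith) (by positivity) (by positivity)
    _ = 384 * Real.pi * ‖hypGeodesic ψ ζ u - x‖ := by ring

end IsRiemannMap

end KoebeAlongGeodesic

section WhitneyPieceGeodesic

variable {U Q : Set ℂ} {φ ψ : ℂ → ℂ} {ζ : ℂ} {L : ℝ}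

theorem distHyp_le_one_of_mem_isWhitneyPiece (h : IsRiemannMap U φ ψ) (hQ : IsWhitneyPiece U Q)
    {z w : ℂ} (hz : z ∈ Q) (hw : w ∈ Q) : distHyp φ U z w ≤ 1 :=
  (distHyp_le_dist_div h.differentiableOn_inv h.mapsTo_inv hQ.convex hQ.diam_pos
    (fun _ hv => hQ.ball_subset hv) hz hw).trans
    (div_le_one_of_le₀ (dist_le_diam_of_mem hQ.isBounded hz hw) diam_nonneg)

theorem IsRiemannMap.length_le_one (h : IsRiemannMap U φ ψ) (hQ : IsWhitneyPiece U Q)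
    (hζ : ‖ζ‖ = 1) (hstart : hypGeodesic ψ ζ 0 ∈ Q) (hend : hypGeodesic ψ ζ L ∈ Q) : L ≤ 1 :=
  calc L ≤ |L - 0| := by rw [sub_zero]; exact le_abs_self L
    _ = distHyp φ U (hypGeodesic ψ ζ 0) (hypGeodesic ψ ζ L) := (h.distHyp_hypGeodesic hζ 0 L).symm
    _ ≤ 1 := distHyp_le_one_of_mem_isWhitneyPiece h hQ hstart hend

theorem IsRiemannMap.distHyp_hypGeodesic_le (h : IsRiemannMap U φ ψ) (hQ : IsWhitneyPiece U Q)
    (hζ : ‖ζ‖ = 1) (hstart : hypGeodesic ψ ζ 0 ∈ Q) {p : ℂ} (hp : p ∈ Q) (u : ℝ) :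
    distHyp φ U (hypGeodesic ψ ζ u) p ≤ |u| + 1 :=
  calc distHyp φ U (hypGeodesic ψ ζ u) p
      ≤ distHyp φ U (hypGeodesic ψ ζ u) (hypGeodesic ψ ζ 0) + distHyp φ U (hypGeodesic ψ ζ 0) p :=
        confDist_triangle (hypDensity_nonneg h.mapsTo_inv)
          (continuousOn_hypDensity h.isOpen h.differentiableOn_inv h.mapsTo_inv)
          ⟨_, h.hypGeodesic_lineMap_mem_pathsIn hζ u 0⟩
          ⟨_, pathsIn_mono hQ.subset _ _ (lineMap_mem_pathsIn hQ.convex hstart hp)⟩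
    _ ≤ |u| + 1 := by
        rw [h.distHyp_hypGeodesic hζ, zero_sub, abs_neg]
        exact add_le_add_right (distHyp_le_one_of_mem_isWhitneyPiece h hQ hstart hp) _

theorem IsRiemannMap.integral_norm_deriv_hypGeodesic_le (h : IsRiemannMap U φ ψ)
    (hQ : IsWhitneyPiece U Q) (hζ : ‖ζ‖ = 1) (hL : 0 ≤ L) (hstart : hypGeodesic ψ ζ 0 ∈ Q)
    (hL1 : L ≤ 1) :
    ∫ u in (0 : ℝ)..L, ‖deriv (hypGeodesic ψ ζ) u‖ ≤
      1920 * Real.pi * Real.exp (384 * Real.pi) * diam Q := by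
  obtain ⟨x, hx, hdist⟩ := hQ.exists_notMem_dist_le
  have hC : 0 ≤ 384 * Real.pi := by positivity
  calc ∫ u in (0 : ℝ)..L, ‖deriv (hypGeodesic ψ ζ) u‖
      ≤ 384 * Real.pi * (‖hypGeodesic ψ ζ 0 - x‖ * Real.exp (384 * Real.pi * L)) * L :=
        integral_norm_deriv_le_of_norm_deriv_le hC hL
          ((contDiff_hypGeodesic h.differentiableOn hζ).differentiable one_ne_zero)
          (h.norm_deriv_hypGeodesic_le hζ hx)
    _ ≤ 384 * Real.pi * (5 * diam Q * Real.exp (384 * Real.pi * 1)) * 1 := by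
        have := mem_closedBall_iff_norm.1 (hdist _ hstart)
        have := diam_nonneg (s := Q)
        gcongr
    _ = 1920 * Real.pi * Real.exp (384 * Real.pi) * diam Q := by ring_nf

end WhitneyPieceGeodesic

theorem stmt19_general : ∃ c : ℝ, 0 < c ∧
    ∀ (U : Set ℂ) (φ ψ : ℂ → ℂ), IsRiemannMap U φ ψ →
    ∀ Q : Set ℂ, IsWhitneyPiece U Q →
    ∀ ζ : ℂ, ‖ζ‖ = 1 → ∀ L : ℝ, 0 ≤ L →
    hypGeodesic ψ ζ 0 ∈ Q → hypGeodesic ψ ζ L ∈ Q →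
    (∀ p ∈ Q, ∀ u ∈ Icc 0 L, distHyp φ U (hypGeodesic ψ ζ u) p ≤ 2) ∧
    ∫ u in (0 : ℝ)..L, ‖deriv (hypGeodesic ψ ζ) u‖ ≤ c * diam Q := by
  refine ⟨1920 * Real.pi * Real.exp (384 * Real.pi), by positivity, ?_⟩
  intro U φ ψ h Q hQ ζ hζ L hL hstart hend
  have hL1 : L ≤ 1 := h.length_le_one hQ hζ hstart hend
  refine ⟨fun p hp u hu => ?_, h.integral_norm_deriv_hypGeodesic_le hQ hζ hL hstart hL1⟩
  have hle := h.distHyp_hypGeodesic_le hQ hζ hstart hp u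
  rw [abs_of_nonneg hu.1] at hle
  linarith [hu.2]

/-- Let `U ⊆ ℂ` be a simply connected domain, `𝒲` a Whitney square decomposition of `U`,
`Q ∈ 𝒲`, and let `γ : [0, L] → U`, `γ(u) = ψ(tanh(u) ζ)` (with `ψ : 𝔻 → U` a Riemann map
and `|ζ| = 1`) be a hyperbolic geodesic segment, parameterized by hyperbolic length, with
both endpoints in `Q`.  Then the whole segment is contained in the closed hyperbolic ball
of radius `2` around `cen(Q)`, and its Euclidean length is at most `c · len(Q)` for a
universal constant `c > 0`. -/
theorem stmt19 : ∃ c : ℝ, 0 < c ∧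
    ∀ (U : Set ℂ), IsOpen U → U ≠ univ →
    ∀ φ ψ : ℂ → ℂ,
    DifferentiableOn ℂ φ U → BijOn φ U (ball (0:ℂ) 1) →
    DifferentiableOn ℂ ψ (ball (0:ℂ) 1) → BijOn ψ (ball (0:ℂ) 1) U →
    (∀ z ∈ ball (0:ℂ) 1, φ (ψ z) = z) →
    ∀ W : Set (ℂ × ℝ), IsWhitneyDecomp U W →
    ∀ q ∈ W, ∀ ζ : ℂ, ‖ζ‖ = 1 → ∀ L : ℝ, 0 ≤ L →
    ψ 0 ∈ square q.1 q.2 → ψ ((Real.tanh L : ℝ) * ζ : ℂ) ∈ square q.1 q.2 →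
    (∀ u : ℝ, 0 ≤ u → u ≤ L →
        distHyp φ U (ψ ((Real.tanh u : ℝ) * ζ : ℂ)) q.1 ≤ 2) ∧
    (∫ u in (0:ℝ)..L, ‖deriv (fun v : ℝ => ψ ((Real.tanh v : ℝ) * ζ : ℂ)) u‖) ≤
      c * q.2 := by
  obtain ⟨c, hc, hgeneral⟩ := stmt19_general
  refine ⟨c * 2, by positivity, ?_⟩
  intro U hU _ φ ψ hφ _ hψ hψU hinv W hW q hq ζ hζ L hL hstart hend
  have hside : 0 ≤ q.2 := (hW.side_pos hq).le
  obtain ⟨hball, hlength⟩ := hgeneral U φ ψ ⟨hU, hφ, hψ, hψU, hinv⟩ _ (hW.isWhitneyPiece hq) ζ hζ L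
    hL ((hypGeodesic_zero ψ ζ).symm ▸ hstart) hend
  refine ⟨fun u hu huL => hball q.1 (center_mem_square hside) u ⟨hu, huL⟩, hlength.trans ?_⟩
  rw [mul_assoc]
  exact mul_le_mul_of_nonneg_left (diam_square_le hside) hc.le

end
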